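/- arXiv:1201.5447 — 5 statements merged into one kernel-verified Lean document; each statement's English description precedes it below -/
import Mathlib

section
/- Let n = 3 and l_1, l_2, l_3 > 0. If (β_2, β_3) is a critical point of A(β_2, β_3) = l_1 l_2 sin β_2 + l_1 l_3 sin β_3 + l_2 l_3 sin(β_3 − β_2), then the length d = |r_3| of the connecting segment r_0 r_3 satisfies one of the two cubic equations d³ = (l_1² + l_2² + l_3²) d + 2 l_1 l_2 l_3 or d³ = (l_1² + l_2² + l_3²) d − 2 l_1 l_2 l_3. -/
/- Planar 3-arm with edge lengths `l₁, l₂, l₃ > 0`, angle coordinates `β₂, β₃`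
(and `β₁ = 0`).  Vertices: `r₀ = (0,0)`, `r₁ = (l₁, 0)`,
`r₂ = r₁ + l₂ (cos β₂, sin β₂)`, `r₃ = r₂ + l₃ (cos β₃, sin β₃)`.  The doubled
oriented area is `A(β₂,β₃) = l₁l₂ sin β₂ + l₁l₃ sin β₃ + l₂l₃ sin (β₃ − β₂)`. -/

noncomputable section

/-- the doubled oriented area of the 3-arm. -/
def area3 (l₁ l₂ l₃ : ℝ) (b₂ b₃ : ℝ) : ℝ :=
  l₁ * l₂ * Real.sin b₂ + l₁ * l₃ * Real.sin b₃ + l₂ * l₃ * Real.sin (b₃ - b₂)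

/-- The Gram determinant of the three unit vectors at angles `0`, `b₂`, `b₃` vanishes. -/
theorem cos_gram_det_eq_zero (b₂ b₃ : ℝ) :
    1 + 2 * Real.cos b₂ * Real.cos b₃ * Real.cos (b₃ - b₂) - Real.cos b₂ ^ 2 - Real.cos b₃ ^ 2
      - Real.cos (b₃ - b₂) ^ 2 = 0 := by
  rw [Real.cos_sub]
  linear_combination (-1 + Real.cos b₃ ^ 2) * Real.sin_sq_add_cos_sq b₂
    - Real.sin b₂ ^ 2 * Real.sin_sq_add_cos_sq b₃

theorem hasDerivAt_area3_left (l₁ l₂ l₃ b₂ b₃ : ℝ) :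
    HasDerivAt (fun t => area3 l₁ l₂ l₃ t b₃)
      (l₁ * l₂ * Real.cos b₂ - l₂ * l₃ * Real.cos (b₃ - b₂)) b₂ := by
  have h := (((Real.hasDerivAt_sin b₂).const_mul (l₁ * l₂)).add_const
    (l₁ * l₃ * Real.sin b₃)).add
    ((((hasDerivAt_id b₂).const_sub b₃).sin).const_mul (l₂ * l₃))
  refine h.congr_deriv ?_
  simp only [id_eq]
  ring

theorem hasDerivAt_area3_right (l₁ l₂ l₃ b₂ b₃ : ℝ) :
    HasDerivAt (fun t => area3 l₁ l₂ l₃ b₂ t)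
      (l₁ * l₃ * Real.cos b₃ + l₂ * l₃ * Real.cos (b₃ - b₂)) b₃ := by
  have h := (((Real.hasDerivAt_sin b₃).const_mul (l₁ * l₃)).const_add
    (l₁ * l₂ * Real.sin b₂)).add
    ((((hasDerivAt_id b₃).sub_const b₂).sin).const_mul (l₂ * l₃))
  refine h.congr_deriv ?_
  simp only [id_eq]
  ring

/-- At a critical point of `A`, the length `d = |r₃|` of the
connecting segment `r₀ r₃` satisfies one of the two cubic equations
`d³ = (l₁² + l₂² + l₃²) d ± 2 l₁ l₂ l₃`. -/
theorem connecting_length_cubic (l₁ l₂ l₃ : ℝ) (h₁ : 0 < l₁) (h₂ : 0 < l₂) (h₃ : 0 < l₃)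
    (b₂ b₃ : ℝ)
    (hcrit₂ : deriv (fun t => area3 l₁ l₂ l₃ t b₃) b₂ = 0)
    (hcrit₃ : deriv (fun t => area3 l₁ l₂ l₃ b₂ t) b₃ = 0)
    (d : ℝ)
    (hd : d = Real.sqrt ((l₁ + l₂ * Real.cos b₂ + l₃ * Real.cos b₃) ^ 2
        + (l₂ * Real.sin b₂ + l₃ * Real.sin b₃) ^ 2)) :
    d ^ 3 = (l₁ ^ 2 + l₂ ^ 2 + l₃ ^ 2) * d + 2 * l₁ * l₂ * l₃ ∨
      d ^ 3 = (l₁ ^ 2 + l₂ ^ 2 + l₃ ^ 2) * d - 2 * l₁ * l₂ * l₃ := by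
  rw [(hasDerivAt_area3_left l₁ l₂ l₃ b₂ b₃).deriv] at hcrit₂
  rw [(hasDerivAt_area3_right l₁ l₂ l₃ b₂ b₃).deriv] at hcrit₃
  have hgram := cos_gram_det_eq_zero b₂ b₃
  have hd2 : d ^ 2 = l₁ ^ 2 + l₂ ^ 2 + l₃ ^ 2 + 2 * l₂ * l₃ * Real.cos (b₃ - b₂) := by
    rw [hd, Real.sq_sqrt (by positivity)]
    rw [Real.cos_sub] at hcrit₂ hcrit₃ ⊢
    linear_combination 2 * hcrit₂ + 2 * hcrit₃ + l₂ ^ 2 * Real.sin_sq_add_cos_sq b₂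
      + l₃ ^ 2 * Real.sin_sq_add_cos_sq b₃
  generalize Real.cos (b₃ - b₂) = k at *
  generalize Real.cos b₂ = x at *
  generalize Real.cos b₃ = y at *
  have hx : l₁ * x = l₃ * k := mul_left_cancel₀ h₂.ne' (by linear_combination hcrit₂)
  have hy : l₁ * y = -(l₂ * k) := mul_left_cancel₀ h₃.ne' (by linear_combination hcrit₃)
  have hk : k ^ 2 * d ^ 2 = l₁ ^ 2 := by
    rw [hd2]
    linear_combination -l₁ ^ 2 * hgram + (2 * k * l₁ * y - l₁ * x - l₃ * k) * hx
      + (2 * k * l₃ * k - l₁ * y + l₂ * k) * hy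
  have hcube : d ^ 3 - (l₁ ^ 2 + l₂ ^ 2 + l₃ ^ 2) * d = 2 * l₂ * l₃ * (k * d) := by
    linear_combination d * hd2
  rcases sq_eq_sq_iff_eq_or_eq_neg.mp ((mul_pow k d 2).trans hk) with h | h
  · left
    linear_combination hcube + 2 * l₂ * l₃ * h
  · right
    linear_combination hcube + 2 * l₂ * l₃ * h

end
end

section
/- For any l_1, l_2, l_3 > 0, each of the two cubic equations d³ = (l_1² + l_2² + l_3²) d + 2 l_1 l_2 l_3 and d³ = (l_1² + l_2² + l_3²) d − 2 l_1 l_2 l_3 has exactly one real solution d satisfying d ≥ l_1 and d ≥ l_3. -/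
/- `l₁, l₂, l₃` are the positive edge lengths of a planar 3-arm; `d` is the length of
the connecting segment, which at a critical configuration is the diameter of the
circumscribed circle and hence at least each of the chords `l₁` and `l₃`. -/

/-- No two distinct roots of `d³ = (a² + e² + c²) d + 2 a e c` are at least `a`
when `0 < c ≤ a`. -/
lemma cubic_roots_not_lt {a c e x y : ℝ} (hc : 0 < c) (hca : c ≤ a)
    (hx : x ^ 3 = (a ^ 2 + e ^ 2 + c ^ 2) * x + 2 * a * e * c)
    (hy : y ^ 3 = (a ^ 2 + e ^ 2 + c ^ 2) * y + 2 * a * e * c) (hax : a ≤ x) : ¬ x < y := by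
  intro hxy
  have hsum : x ^ 2 + x * y + y ^ 2 = a ^ 2 + e ^ 2 + c ^ 2 :=
    mul_left_cancel₀ (sub_ne_zero.mpr hxy.ne') (by linear_combination hy - hx)
  have ha : 0 < a := hc.trans_le hca
  have hval : (x - a) * ((y - a) * (a + x + y)) = -(a * (e + c) ^ 2) := by
    linear_combination (x - a) * hsum - hx
  have hpos : 0 < (y - a) * (a + x + y) := mul_pos (by linarith) (by linarith)
  have hxa : x = a := by
    by_contra hne
    have := mul_pos (sub_pos.mpr (lt_of_le_of_ne hax (Ne.symm hne))) hpos
    nlinarith [mul_nonneg ha.le (sq_nonneg (e + c))]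
  subst hxa
  have hec : (e + c) ^ 2 = 0 :=
    (mul_eq_zero.mp (by linarith : x * (e + c) ^ 2 = 0)).resolve_left ha.ne'
  obtain rfl : e = -c := by linarith [pow_eq_zero_iff two_ne_zero |>.mp hec]
  nlinarith

/-- The cubic `d³ = (a² + e² + c²) d + 2 a e c` with `0 < c ≤ a` has exactly one root
that is at least `a`. -/
lemma existsUnique_cubic_root {a c : ℝ} (e : ℝ) (hc : 0 < c) (hca : c ≤ a) :
    ∃! d : ℝ, d ^ 3 = (a ^ 2 + e ^ 2 + c ^ 2) * d + 2 * a * e * c ∧ a ≤ d := by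
  have ha : 0 < a := hc.trans_le hca
  have he := abs_nonneg e
  have hroot : ∃ d ∈ Set.Icc a (a + |e| + c),
      d ^ 3 - (a ^ 2 + e ^ 2 + c ^ 2) * d - 2 * a * e * c = 0 := by
    refine intermediate_value_Icc (by linarith)
      (f := fun d : ℝ => d ^ 3 - (a ^ 2 + e ^ 2 + c ^ 2) * d - 2 * a * e * c)
      (by fun_prop) ⟨?_, ?_⟩
    · have := mul_nonneg ha.le (sq_nonneg (e + c))
      linarith
    · have hle : a * c * e ≤ a * c * |e| := by gcongr; exact le_abs_self e
      have hnonneg : 0 ≤ 2 * (a * |e| + |e| * c) * (a + |e| + c) +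
          2 * (a * c) * (a + c) := by positivity
      rw [← sq_abs e]
      linarith
  obtain ⟨d, ⟨had, -⟩, hd⟩ := hroot
  have hd' : d ^ 3 = (a ^ 2 + e ^ 2 + c ^ 2) * d + 2 * a * e * c := by linarith
  exact ⟨d, ⟨hd', had⟩, fun y ⟨hy, hay⟩ => le_antisymm
    (not_lt.mp (cubic_roots_not_lt hc hca hd' hy had))
    (not_lt.mp (cubic_roots_not_lt hc hca hy hd' hay))⟩

/-- The cubic `d³ = (a² + e² + c²) d + 2 a e c` with `a, c > 0` has exactly one root
that is at least both `a` and `c`. -/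
lemma existsUnique_cubic_root_ge_both {a c : ℝ} (e : ℝ) (ha : 0 < a) (hc : 0 < c) :
    ∃! d : ℝ, d ^ 3 = (a ^ 2 + e ^ 2 + c ^ 2) * d + 2 * a * e * c ∧ a ≤ d ∧ c ≤ d := by
  rcases le_total c a with h | h
  · refine (existsUnique_congr fun d => ?_).mp (existsUnique_cubic_root e hc h)
    exact and_congr_right fun _ => ⟨fun hd => ⟨hd, h.trans hd⟩, fun hd => hd.1⟩
  · refine (existsUnique_congr fun d => ?_).mp (existsUnique_cubic_root e ha h)
    refine and_congr ?_ ⟨fun hd => ⟨h.trans hd, hd⟩, fun hd => hd.2⟩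
    ring_nf

/-- Each of the two cubic equations
`d³ = (l₁² + l₂² + l₃²) d ± 2 l₁ l₂ l₃` has exactly one real solution `d` with
`d ≥ l₁` and `d ≥ l₃`. -/
theorem cubic_unique_root (l₁ l₂ l₃ : ℝ) (h₁ : 0 < l₁) (h₂ : 0 < l₂) (h₃ : 0 < l₃) :
    (∃! d : ℝ, d ^ 3 = (l₁ ^ 2 + l₂ ^ 2 + l₃ ^ 2) * d + 2 * l₁ * l₂ * l₃ ∧
        l₁ ≤ d ∧ l₃ ≤ d) ∧
    (∃! d : ℝ, d ^ 3 = (l₁ ^ 2 + l₂ ^ 2 + l₃ ^ 2) * d - 2 * l₁ * l₂ * l₃ ∧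
        l₁ ≤ d ∧ l₃ ≤ d) := by
  refine ⟨existsUnique_cubic_root_ge_both l₂ h₁ h₃, ?_⟩
  simpa [sub_eq_add_neg] using existsUnique_cubic_root_ge_both (-l₂) h₁ h₃
end

section
/- Let n = 3 and l_1, l_2, l_3 > 0. If (β_2, β_3) is a critical point of A(β_2, β_3) = l_1 l_2 sin β_2 + l_1 l_3 sin β_3 + l_2 l_3 sin(β_3 − β_2) and d = |r_3| > 0, then there exists σ ∈ {+1, −1} such that cos β_2 = σ l_3 / d, cos(β_3 − β_2) = σ l_1 / d, and cos β_3 = −σ l_2 / d. -/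
/- Planar 3-arm with edge lengths `l₁, l₂, l₃ > 0`, angle coordinates `β₂, β₃`
(and `β₁ = 0`).  Vertices: `r₀ = (0,0)`, `r₁ = (l₁, 0)`,
`r₂ = r₁ + l₂ (cos β₂, sin β₂)`, `r₃ = r₂ + l₃ (cos β₃, sin β₃)`.  The doubled
oriented area is `A(β₂,β₃) = l₁l₂ sin β₂ + l₁l₃ sin β₃ + l₂l₃ sin (β₃ − β₂)`. -/

noncomputable section

/-- The Gram determinant of three unit vectors in the plane vanishes. -/
theorem cos_gram_eq_zero (x y : ℝ) :
    1 + 2 * Real.cos x * Real.cos y * Real.cos (y - x)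
      - Real.cos x ^ 2 - Real.cos y ^ 2 - Real.cos (y - x) ^ 2 = 0 := by
  rw [Real.cos_sub]
  linear_combination (Real.cos y ^ 2 - 1) * Real.sin_sq_add_cos_sq x
    - Real.sin x ^ 2 * Real.sin_sq_add_cos_sq y

/-- The squared distance between the endpoints of the 3-arm. -/
theorem arm3_dist_sq (l₁ l₂ l₃ b₂ b₃ : ℝ) :
    (l₁ + l₂ * Real.cos b₂ + l₃ * Real.cos b₃) ^ 2
        + (l₂ * Real.sin b₂ + l₃ * Real.sin b₃) ^ 2
      = l₁ ^ 2 + l₂ ^ 2 + l₃ ^ 2 + 2 * l₁ * l₂ * Real.cos b₂ + 2 * l₁ * l₃ * Real.cos b₃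
        + 2 * l₂ * l₃ * Real.cos (b₃ - b₂) := by
  rw [Real.cos_sub]
  linear_combination l₂ ^ 2 * Real.sin_sq_add_cos_sq b₂ + l₃ ^ 2 * Real.sin_sq_add_cos_sq b₃

/-- At a critical point of `A` with `d = |r₃| > 0` there is a sign
`σ ∈ {+1, −1}` with `cos β₂ = σ l₃ / d`, `cos (β₃ − β₂) = σ l₁ / d` and
`cos β₃ = − σ l₂ / d`. -/
theorem critical_cosines (l₁ l₂ l₃ : ℝ) (h₁ : 0 < l₁) (h₂ : 0 < l₂) (h₃ : 0 < l₃)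
    (b₂ b₃ : ℝ)
    (hcrit₂ : deriv (fun t => area3 l₁ l₂ l₃ t b₃) b₂ = 0)
    (hcrit₃ : deriv (fun t => area3 l₁ l₂ l₃ b₂ t) b₃ = 0)
    (d : ℝ)
    (hd : d = Real.sqrt ((l₁ + l₂ * Real.cos b₂ + l₃ * Real.cos b₃) ^ 2
        + (l₂ * Real.sin b₂ + l₃ * Real.sin b₃) ^ 2))
    (hdpos : 0 < d) :
    ∃ σ : ℝ, (σ = 1 ∨ σ = -1) ∧
      Real.cos b₂ = σ * l₃ / d ∧
      Real.cos (b₃ - b₂) = σ * l₁ / d ∧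
      Real.cos b₃ = -(σ * l₂) / d := by
  rw [(hasDerivAt_area3_left l₁ l₂ l₃ b₂ b₃).deriv] at hcrit₂
  rw [(hasDerivAt_area3_right l₁ l₂ l₃ b₂ b₃).deriv] at hcrit₃
  obtain ⟨k, hk⟩ : ∃ k, Real.cos (b₃ - b₂) = k * l₁ :=
    ⟨Real.cos (b₃ - b₂) / l₁, by field_simp⟩
  have hcos₂ : Real.cos b₂ = k * l₃ := by
    apply mul_left_cancel₀ (mul_pos h₁ h₂).ne'
    linear_combination hcrit₂ + l₂ * l₃ * hk
  have hcos₃ : Real.cos b₃ = -(k * l₂) := by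
    apply mul_left_cancel₀ (mul_pos h₁ h₃).ne'
    linear_combination hcrit₃ - l₂ * l₃ * hk
  have hdsq : d ^ 2 = l₁ ^ 2 + l₂ ^ 2 + l₃ ^ 2 + 2 * k * l₁ * l₂ * l₃ := by
    rw [hd, Real.sq_sqrt (by positivity), arm3_dist_sq, hk, hcos₂, hcos₃]
    ring
  have hgram := cos_gram_eq_zero b₂ b₃
  rw [hk, hcos₂, hcos₃] at hgram
  refine ⟨k * d, sq_eq_one_iff.mp ?_, ?_, ?_, ?_⟩
  · linear_combination k ^ 2 * hdsq - hgram
  · rw [hcos₂]; field_simp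
  · rw [hk]; field_simp
  · rw [hcos₃]; field_simp

end
end

section
/- Let l_1, l_2, l_3 > 0 and assume that not all three lengths are equal (¬(l_1 = l_2 = l_3)). Then the function A(β_2, β_3) = l_1 l_2 sin β_2 + l_1 l_3 sin β_3 + l_2 l_3 sin(β_3 − β_2) has exactly four critical points on the torus (ℝ/2πℤ)², and they occur in pairs of the form (β_2, β_3) and (−β_2, −β_3). -/
/- Planar 3-arm with edge lengths `l₁, l₂, l₃ > 0`.  The moduli space is the torus
`(ℝ/2πℤ)² = Real.Angle × Real.Angle` with coordinates `(β₂, β₃)`; the doubled oriented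
area is the `2π`-periodic function `A(β₂,β₃) = l₁l₂ sin β₂ + l₁l₃ sin β₃ +
l₂l₃ sin (β₃ − β₂)`, so a point of the torus is critical iff both partial derivatives
of this lift vanish at any (equivalently, every) representative. -/

noncomputable section

/-- the set of critical points of the oriented area on the torus `(ℝ/2πℤ)²`. -/
def crit3 (l₁ l₂ l₃ : ℝ) : Set (Real.Angle × Real.Angle) :=
  {p | ∀ b₂ b₃ : ℝ, (b₂ : Real.Angle) = p.1 → (b₃ : Real.Angle) = p.2 →
    deriv (fun t => area3 l₁ l₂ l₃ t b₃) b₂ = 0 ∧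
    deriv (fun t => area3 l₁ l₂ l₃ b₂ t) b₃ = 0}

lemma angle_cos_sub (a b : Real.Angle) :
    (a - b).cos = a.cos * b.cos + a.sin * b.sin := by
  rw [sub_eq_add_neg, Real.Angle.cos_add, Real.Angle.cos_neg, Real.Angle.sin_neg]
  ring

/-- Given admissible values of `cos a`, `cos (c - a)` and `cos c`, with `cos a` and `cos c` not both
`±1`, the pair of angles `(a, c)` exists and is determined up to a common sign. -/
lemma ncard_cos_cos_sub (x y z : ℝ) (hx : x ^ 2 ≤ 1) (hz : z ^ 2 ≤ 1)
    (hxz : ¬(x ^ 2 = 1 ∧ z ^ 2 = 1)) (h : 1 - x ^ 2 - y ^ 2 - z ^ 2 + 2 * x * y * z = 0) :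
    {p : Real.Angle × Real.Angle | p.1.cos = x ∧ p.2.cos = z ∧ (p.2 - p.1).cos = y}.ncard = 2 := by
  have hex : ∀ t : ℝ, t ^ 2 ≤ 1 → ∃ a : Real.Angle, a.cos = t := fun t ht =>
    ⟨(Real.arccos t : ℝ), by
      rw [Real.Angle.cos_coe, Real.cos_arccos (by nlinarith) (by nlinarith)]⟩
  have hneg : ∀ a : Real.Angle, a.sin = 0 → a = -a := fun a ha =>
    Real.Angle.eq_neg_self_iff.2 (Real.Angle.sin_eq_zero_iff.1 ha)
  obtain ⟨a, ha⟩ := hex x hx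
  obtain ⟨c, hc, hs⟩ : ∃ c : Real.Angle, c.cos = z ∧ c.sin * a.sin = y - x * z := by
    obtain ⟨c, hc⟩ := hex z hz
    have key : (c.sin * a.sin) ^ 2 = (y - x * z) ^ 2 := by
      have e1 := Real.Angle.cos_sq_add_sin_sq c
      have e2 := Real.Angle.cos_sq_add_sin_sq a
      rw [hc] at e1
      rw [ha] at e2
      rw [mul_pow, eq_sub_of_add_eq' e1, eq_sub_of_add_eq' e2]
      linear_combination h
    rcases sq_eq_sq_iff_eq_or_eq_neg.1 key with k | k
    · exact ⟨c, hc, k⟩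
    · exact ⟨-c, by rw [Real.Angle.cos_neg, hc], by rw [Real.Angle.sin_neg]; linarith⟩
  refine Set.ncard_eq_two.2 ⟨(a, c), (-a, -c), ?_, ?_⟩
  · intro heq
    rw [Prod.mk.injEq, Real.Angle.eq_neg_self_iff, Real.Angle.eq_neg_self_iff,
      ← Real.Angle.sin_eq_zero_iff, ← Real.Angle.sin_eq_zero_iff] at heq
    have e1 := Real.Angle.cos_sq_add_sin_sq c
    have e2 := Real.Angle.cos_sq_add_sin_sq a
    rw [hc, heq.2] at e1
    rw [ha, heq.1] at e2
    exact hxz ⟨by linarith, by linarith⟩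
  · ext ⟨a', c'⟩
    simp only [Set.mem_ofPred_eq, Set.mem_insert_iff, Set.mem_singleton_iff, Prod.mk.injEq]
    constructor
    · rintro ⟨ha', hc', hs'⟩
      rw [angle_cos_sub, ha', hc'] at hs'
      have hmixed : c.sin * a.sin = -(c.sin * a.sin) → c = -c ∨ a = -a := fun e =>
        (mul_eq_zero.1 (by linarith : c.sin * a.sin = 0)).imp (hneg c) (hneg a)
      rcases Real.Angle.cos_eq_iff_eq_or_eq_neg.1 (ha'.trans ha.symm) with rfl | rfl <;>
        rcases Real.Angle.cos_eq_iff_eq_or_eq_neg.1 (hc'.trans hc.symm) with rfl | rfl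
      · simp
      · rw [Real.Angle.sin_neg] at hs'
        rcases hmixed (by linarith) with e | e
        · exact Or.inl ⟨rfl, e.symm⟩
        · exact Or.inr ⟨e, rfl⟩
      · rw [Real.Angle.sin_neg] at hs'
        rcases hmixed (by linarith) with e | e
        · exact Or.inr ⟨rfl, e⟩
        · exact Or.inl ⟨e.symm, rfl⟩
      · simp
    · rintro (⟨rfl, rfl⟩ | ⟨rfl, rfl⟩)
      · exact ⟨ha, hc, by rw [angle_cos_sub, ha, hc, hs]; ring⟩
      · refine ⟨by rw [Real.Angle.cos_neg, ha], by rw [Real.Angle.cos_neg, hc], ?_⟩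
        rw [angle_cos_sub, Real.Angle.cos_neg, Real.Angle.cos_neg, Real.Angle.sin_neg,
          Real.Angle.sin_neg, ha, hc]
        linarith

/-- The cubic obtained by eliminating the angles from the critical point equations. -/
def critCubic (l₁ l₂ l₃ u : ℝ) : ℝ :=
  1 - (l₁ ^ 2 + l₂ ^ 2 + l₃ ^ 2) * u ^ 2 - 2 * (l₁ * l₂ * l₃) * u ^ 3

/-- The values of `u` for which `l₁ * u`, `l₂ * u`, `l₃ * u` are realised as cosines. -/
def IsAdmissibleRoot (l₁ l₂ l₃ u : ℝ) : Prop :=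
  critCubic l₁ l₂ l₃ u = 0 ∧ (l₁ * u) ^ 2 ≤ 1 ∧ (l₂ * u) ^ 2 ≤ 1 ∧ (l₃ * u) ^ 2 ≤ 1

lemma exists_isAdmissibleRoot_of_max {l₁ l₂ l₃ : ℝ} (h₁ : 0 < l₁) (h₂ : 0 < l₂) (h₃ : 0 < l₃)
    (h₂₁ : l₂ ≤ l₁) (h₃₁ : l₃ ≤ l₁) :
    (∃ u > 0, IsAdmissibleRoot l₁ l₂ l₃ u) ∧ ∃ u < 0, IsAdmissibleRoot l₁ l₂ l₃ u := by
  have hcont : Continuous (critCubic l₁ l₂ l₃) := by unfold critCubic; fun_prop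
  have hzero : critCubic l₁ l₂ l₃ 0 = 1 := by simp [critCubic]
  have hinv : 0 < l₁⁻¹ := inv_pos.2 h₁
  have hmul : l₁ * l₁⁻¹ = 1 := mul_inv_cancel₀ h₁.ne'
  have hbound : ∀ u, |u| ≤ l₁⁻¹ → ∀ l, 0 < l → l ≤ l₁ → (l * u) ^ 2 ≤ 1 := by
    intro u hu l hl hle
    rw [sq_le_one_iff_abs_le_one, abs_mul, abs_of_pos hl, ← hmul]
    gcongr
  have hadm : ∀ u, |u| ≤ l₁⁻¹ → critCubic l₁ l₂ l₃ u = 0 → IsAdmissibleRoot l₁ l₂ l₃ u :=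
    fun u hu h0 => ⟨h0, hbound u hu l₁ h₁ le_rfl, hbound u hu l₂ h₂ h₂₁, hbound u hu l₃ h₃ h₃₁⟩
  constructor
  · have hend : critCubic l₁ l₂ l₃ l₁⁻¹ ≤ 0 := by
      have : critCubic l₁ l₂ l₃ l₁⁻¹ = -((l₂ + l₃) * l₁⁻¹) ^ 2 := by
        unfold critCubic; field_simp; ring
      rw [this]; nlinarith [sq_nonneg ((l₂ + l₃) * l₁⁻¹)]
    obtain ⟨u, hu, h0⟩ := intermediate_value_Icc' hinv.le hcont.continuousOn
      (show (0 : ℝ) ∈ _ from ⟨hend, by rw [hzero]; exact zero_le_one⟩)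
    refine ⟨u, lt_of_le_of_ne hu.1 ?_, hadm u (abs_le.2 ⟨by linarith [hu.1], hu.2⟩) h0⟩
    rintro rfl
    linarith
  · have hend : critCubic l₁ l₂ l₃ (-l₁⁻¹) ≤ 0 := by
      have : critCubic l₁ l₂ l₃ (-l₁⁻¹) = -((l₂ - l₃) * l₁⁻¹) ^ 2 := by
        unfold critCubic; field_simp; ring
      rw [this]; nlinarith [sq_nonneg ((l₂ - l₃) * l₁⁻¹)]
    obtain ⟨u, hu, h0⟩ := intermediate_value_Icc (neg_nonpos.2 hinv.le) hcont.continuousOn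
      (show (0 : ℝ) ∈ _ from ⟨hend, by rw [hzero]; exact zero_le_one⟩)
    refine ⟨u, lt_of_le_of_ne hu.2 ?_, hadm u (abs_le.2 ⟨hu.1, by linarith [hu.2]⟩) h0⟩
    rintro rfl
    linarith

lemma IsAdmissibleRoot.swap {l₁ l₂ l₃ u : ℝ} (h : IsAdmissibleRoot l₁ l₂ l₃ u) :
    IsAdmissibleRoot l₂ l₁ l₃ u :=
  ⟨by rw [← h.1]; unfold critCubic; ring, h.2.2.1, h.2.1, h.2.2.2⟩

lemma IsAdmissibleRoot.rotate {l₁ l₂ l₃ u : ℝ} (h : IsAdmissibleRoot l₁ l₂ l₃ u) :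
    IsAdmissibleRoot l₂ l₃ l₁ u :=
  ⟨by rw [← h.1]; unfold critCubic; ring, h.2.2.1, h.2.2.2, h.2.1⟩

lemma exists_isAdmissibleRoot {l₁ l₂ l₃ : ℝ} (h₁ : 0 < l₁) (h₂ : 0 < l₂) (h₃ : 0 < l₃) :
    (∃ u > 0, IsAdmissibleRoot l₁ l₂ l₃ u) ∧ ∃ u < 0, IsAdmissibleRoot l₁ l₂ l₃ u := by
  rcases le_total l₂ l₁ with h₂₁ | h₁₂
  · rcases le_total l₃ l₁ with h₃₁ | h₁₃
    · exact exists_isAdmissibleRoot_of_max h₁ h₂ h₃ h₂₁ h₃₁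
    · obtain ⟨⟨u, hu, hu'⟩, v, hv, hv'⟩ :=
        exists_isAdmissibleRoot_of_max h₃ h₁ h₂ h₁₃ (h₂₁.trans h₁₃)
      exact ⟨⟨u, hu, hu'.rotate⟩, v, hv, hv'.rotate⟩
  · rcases le_total l₃ l₂ with h₃₂ | h₂₃
    · obtain ⟨⟨u, hu, hu'⟩, v, hv, hv'⟩ := exists_isAdmissibleRoot_of_max h₂ h₁ h₃ h₁₂ h₃₂
      exact ⟨⟨u, hu, hu'.swap⟩, v, hv, hv'.swap⟩
    · obtain ⟨⟨u, hu, hu'⟩, v, hv, hv'⟩ :=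
        exists_isAdmissibleRoot_of_max h₃ h₁ h₂ (h₁₂.trans h₂₃) h₂₃
      exact ⟨⟨u, hu, hu'.rotate⟩, v, hv, hv'.rotate⟩

lemma IsAdmissibleRoot.eq_of_pos {l₁ l₂ l₃ u v : ℝ} (h₁ : 0 < l₁) (h₂ : 0 < l₂) (h₃ : 0 < l₃)
    (hu : IsAdmissibleRoot l₁ l₂ l₃ u) (hv : IsAdmissibleRoot l₁ l₂ l₃ v)
    (hu0 : 0 < u) (hv0 : 0 < v) : u = v := by
  have hfac : (u - v) * ((l₁ ^ 2 + l₂ ^ 2 + l₃ ^ 2) * (u + v)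
      + 2 * (l₁ * l₂ * l₃) * (u ^ 2 + u * v + v ^ 2)) = 0 := by
    have e1 := hu.1
    have e2 := hv.1
    unfold critCubic at e1 e2
    linear_combination e2 - e1
  rcases mul_eq_zero.1 hfac with h | h
  · linarith
  · exact absurd h (by positivity)

/-- In the variable `w = u⁻¹` the cubic is depressed, and two distinct roots `w, z` satisfy
`w ^ 2 + w * z + z ^ 2 = l₁ ^ 2 + l₂ ^ 2 + l₃ ^ 2`. -/
lemma IsAdmissibleRoot.eq_of_neg {l₁ l₂ l₃ u v : ℝ} (h₁ : 0 < l₁) (h₂ : 0 < l₂) (h₃ : 0 < l₃)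
    (hne : ¬(l₁ = l₂ ∧ l₂ = l₃))
    (hu : IsAdmissibleRoot l₁ l₂ l₃ u) (hv : IsAdmissibleRoot l₁ l₂ l₃ v)
    (hu0 : u < 0) (hv0 : v < 0) : u = v := by
  have hdepressed : ∀ t, t < 0 → IsAdmissibleRoot l₁ l₂ l₃ t → ∃ r > 0, t = -r⁻¹ ∧
      r ^ 3 - (l₁ ^ 2 + l₂ ^ 2 + l₃ ^ 2) * r + 2 * (l₁ * l₂ * l₃) = 0 ∧
      l₁ ≤ r ∧ l₂ ≤ r ∧ l₃ ≤ r := by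
    intro t ht hroot
    have hr : 0 < -t⁻¹ := neg_pos.2 (inv_lt_zero.2 ht)
    have hle : ∀ l, 0 < l → (l * t) ^ 2 ≤ 1 → l ≤ -t⁻¹ := by
      intro l hl hlt
      rw [← inv_neg, le_inv_comm₀ hl (neg_pos.2 ht), ← one_div, le_div_iff₀ hl]
      nlinarith [mul_pos hl (neg_pos.2 ht)]
    refine ⟨-t⁻¹, hr, by simp, ?_, hle _ h₁ hroot.2.1, hle _ h₂ hroot.2.2.1,
      hle _ h₃ hroot.2.2.2⟩
    have e := hroot.1
    unfold critCubic at e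
    have ht' := ht.ne
    field_simp
    linear_combination -e
  obtain ⟨r, hr, rfl, er, r₁, r₂, r₃⟩ := hdepressed u hu0 hu
  obtain ⟨s, hs, rfl, es, s₁, s₂, s₃⟩ := hdepressed v hv0 hv
  have hfac : (r - s) * (r ^ 2 + r * s + s ^ 2 - (l₁ ^ 2 + l₂ ^ 2 + l₃ ^ 2)) = 0 := by
    linear_combination er - es
  rcases mul_eq_zero.1 hfac with h | h
  · rw [sub_eq_zero.1 h]
  · have a₁ : l₁ ^ 2 ≤ r ^ 2 := by gcongr
    have a₂ : l₂ ^ 2 ≤ r * s := by rw [sq]; gcongr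
    have a₃ : l₃ ^ 2 ≤ s ^ 2 := by gcongr
    have b₂ : l₂ ^ 2 ≤ r ^ 2 := by gcongr
    have b₁ : l₁ ^ 2 ≤ r * s := by rw [sq]; gcongr
    have c₃ : l₃ ^ 2 ≤ r * s := by rw [sq]; gcongr
    have c₂ : l₂ ^ 2 ≤ s ^ 2 := by gcongr
    refine absurd ⟨?_, ?_⟩ hne
    · exact (sq_eq_sq₀ h₁.le h₂.le).1 (by linarith)
    · exact (sq_eq_sq₀ h₂.le h₃.le).1 (by linarith)

lemma mem_crit3_iff {l₁ l₂ l₃ : ℝ} (h₂ : 0 < l₂) (h₃ : 0 < l₃) (p : Real.Angle × Real.Angle) :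
    p ∈ crit3 l₁ l₂ l₃ ↔
      l₁ * p.1.cos = l₃ * (p.2 - p.1).cos ∧ l₁ * p.2.cos = -l₂ * (p.2 - p.1).cos := by
  have hderiv₂ : ∀ b₂ b₃ : ℝ, deriv (fun t => area3 l₁ l₂ l₃ t b₃) b₂
      = l₂ * (l₁ * Real.cos b₂ - l₃ * Real.cos (b₃ - b₂)) := by
    intro b₂ b₃
    have h := (((Real.hasDerivAt_sin b₂).const_mul (l₁ * l₂)).add_const
      (l₁ * l₃ * Real.sin b₃)).add ((((hasDerivAt_id b₂).const_sub b₃).sin).const_mul (l₂ * l₃))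
    exact h.deriv.trans (by simp only [id]; ring)
  have hderiv₃ : ∀ b₂ b₃ : ℝ, deriv (fun t => area3 l₁ l₂ l₃ b₂ t) b₃
      = l₃ * (l₁ * Real.cos b₃ + l₂ * Real.cos (b₃ - b₂)) := by
    intro b₂ b₃
    have h := (((Real.hasDerivAt_sin b₃).const_mul (l₁ * l₃)).const_add
      (l₁ * l₂ * Real.sin b₂)).add ((((hasDerivAt_id b₃).sub_const b₂).sin).const_mul (l₂ * l₃))
    exact h.deriv.trans (by simp only [id]; ring)
  have hiff : ∀ b₂ b₃ : ℝ, (deriv (fun t => area3 l₁ l₂ l₃ t b₃) b₂ = 0 ∧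
      deriv (fun t => area3 l₁ l₂ l₃ b₂ t) b₃ = 0) ↔
      l₁ * (b₂ : Real.Angle).cos = l₃ * ((b₃ : Real.Angle) - b₂).cos ∧
      l₁ * (b₃ : Real.Angle).cos = -l₂ * ((b₃ : Real.Angle) - b₂).cos := by
    intro b₂ b₃
    rw [hderiv₂, hderiv₃, ← Real.Angle.coe_sub, Real.Angle.cos_coe, Real.Angle.cos_coe,
      Real.Angle.cos_coe, mul_eq_zero_iff_left h₂.ne', mul_eq_zero_iff_left h₃.ne',
      sub_eq_zero, add_eq_zero_iff_eq_neg, neg_mul]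
  obtain ⟨a, c⟩ := p
  induction a using Real.Angle.induction_on with | _ b₂
  induction c using Real.Angle.induction_on with | _ b₃
  constructor
  · intro h
    exact (hiff b₂ b₃).1 (h b₂ b₃ rfl rfl)
  · intro h b₂' b₃' e₂ e₃
    rw [hiff, e₂, e₃]
    exact h

/-- The critical points with parameter `u = (β₃ - β₂).cos / l₁`. -/
def critFiber (l₁ l₂ l₃ u : ℝ) : Set (Real.Angle × Real.Angle) :=
  {p | p.1.cos = l₃ * u ∧ p.2.cos = -l₂ * u ∧ (p.2 - p.1).cos = l₁ * u}

lemma ncard_critFiber {l₁ l₂ l₃ u : ℝ} (h₁ : 0 < l₁) (h₂ : 0 < l₂) (h₃ : 0 < l₃)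
    (hne : ¬(l₁ = l₂ ∧ l₂ = l₃)) (hu : IsAdmissibleRoot l₁ l₂ l₃ u) :
    (critFiber l₁ l₂ l₃ u).ncard = 2 := by
  obtain ⟨h0, -, hu₂, hu₃⟩ := hu
  unfold critCubic at h0
  refine ncard_cos_cos_sub _ _ _ hu₃ (by linarith) ?_ (by linear_combination h0)
  rintro ⟨e₃, e₂⟩
  have hu0 : u ≠ 0 := by rintro rfl; simp at e₃
  have e : (l₁ * u + l₂ * l₃ * u ^ 2) ^ 2 = 0 := by
    linear_combination -h0 + e₃ * ((-l₂ * u) ^ 2 - 1)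
  have e₁ : (l₁ * u) ^ 2 = 1 := by
    have := pow_eq_zero_iff (two_ne_zero) |>.1 e
    rw [eq_neg_of_add_eq_zero_left this]
    linear_combination (l₂ * u) ^ 2 * e₃ + e₂
  have hcancel : ∀ a b : ℝ, 0 < a → 0 < b → (a * u) ^ 2 = (b * u) ^ 2 → a = b := by
    intro a b ha hb hab
    rw [mul_pow, mul_pow] at hab
    exact (sq_eq_sq₀ ha.le hb.le).1 (mul_right_cancel₀ (pow_ne_zero 2 hu0) hab)
  exact hne ⟨hcancel _ _ h₁ h₂ (by linarith), hcancel _ _ h₂ h₃ (by linarith)⟩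

lemma mem_crit3_iff_exists {l₁ l₂ l₃ : ℝ} (h₁ : 0 < l₁) (h₂ : 0 < l₂) (h₃ : 0 < l₃)
    (p : Real.Angle × Real.Angle) :
    p ∈ crit3 l₁ l₂ l₃ ↔ ∃ u, IsAdmissibleRoot l₁ l₂ l₃ u ∧ p ∈ critFiber l₁ l₂ l₃ u := by
  rw [mem_crit3_iff h₂ h₃]
  constructor
  · rintro ⟨e₂, e₃⟩
    have hcos_sq : ∀ a : Real.Angle, a.cos ^ 2 ≤ 1 := fun a => by
      nlinarith [Real.Angle.cos_sq_add_sin_sq a, sq_nonneg a.sin]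
    have hc₁ : (p.2 - p.1).cos = l₁ * ((p.2 - p.1).cos / l₁) := by field_simp
    have hc₂ : p.1.cos = l₃ * ((p.2 - p.1).cos / l₁) := by
      field_simp; linarith
    have hc₃ : p.2.cos = -l₂ * ((p.2 - p.1).cos / l₁) := by
      field_simp; linarith
    have hrel := angle_cos_sub p.2 p.1
    generalize (p.2 - p.1).cos / l₁ = u at hc₁ hc₂ hc₃
    have s₁ := hcos_sq (p.2 - p.1)
    have s₂ := hcos_sq p.1
    have s₃ := hcos_sq p.2
    have t₂ := Real.Angle.cos_sq_add_sin_sq p.1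
    have t₃ := Real.Angle.cos_sq_add_sin_sq p.2
    refine ⟨u, ⟨?_, hc₁ ▸ s₁, ?_, hc₂ ▸ s₂⟩, hc₂, hc₃, hc₁⟩
    · rw [hc₁, hc₂, hc₃] at hrel
      rw [hc₂] at t₂
      rw [hc₃] at t₃
      have hprod : (p.2.sin * p.1.sin) ^ 2 = (l₁ * u + l₂ * l₃ * u ^ 2) ^ 2 := by
        congr 1; linear_combination -hrel
      rw [mul_pow, eq_sub_of_add_eq' t₂, eq_sub_of_add_eq' t₃] at hprod
      unfold critCubic
      linear_combination hprod
    · rw [hc₃] at s₃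
      linarith
  · rintro ⟨u, -, e₂, e₃, e₁⟩
    rw [e₁, e₂, e₃]
    exact ⟨by ring, by ring⟩

/-- If the three lengths are not all equal, then `A` has exactly four
critical points on the torus, and they occur in pairs `(β₂, β₃)`, `(−β₂, −β₃)`. -/
theorem four_critical_points (l₁ l₂ l₃ : ℝ) (h₁ : 0 < l₁) (h₂ : 0 < l₂) (h₃ : 0 < l₃)
    (hne : ¬(l₁ = l₂ ∧ l₂ = l₃)) :
    (crit3 l₁ l₂ l₃).ncard = 4 ∧
      ∀ p ∈ crit3 l₁ l₂ l₃, (-p.1, -p.2) ∈ crit3 l₁ l₂ l₃ := by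
  refine ⟨?_, fun p hp => ?_⟩
  · obtain ⟨⟨u, hu0, hu⟩, v, hv0, hv⟩ := exists_isAdmissibleRoot h₁ h₂ h₃
    have hunion : crit3 l₁ l₂ l₃ = critFiber l₁ l₂ l₃ u ∪ critFiber l₁ l₂ l₃ v := by
      ext p
      rw [mem_crit3_iff_exists h₁ h₂ h₃, Set.mem_union]
      constructor
      · rintro ⟨w, hw, hp⟩
        rcases lt_trichotomy w 0 with hw0 | rfl | hw0
        · exact Or.inr (hw.eq_of_neg h₁ h₂ h₃ hne hv hw0 hv0 ▸ hp)
        · simp [IsAdmissibleRoot, critCubic] at hw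
        · exact Or.inl (hw.eq_of_pos h₁ h₂ h₃ hu hw0 hu0 ▸ hp)
      · rintro (hp | hp)
        exacts [⟨u, hu, hp⟩, ⟨v, hv, hp⟩]
    have hcu := ncard_critFiber h₁ h₂ h₃ hne hu
    have hcv := ncard_critFiber h₁ h₂ h₃ hne hv
    have hdisj : Disjoint (critFiber l₁ l₂ l₃ u) (critFiber l₁ l₂ l₃ v) := by
      refine Set.disjoint_left.2 fun p hpu hpv => ?_
      have := mul_left_cancel₀ h₁.ne' (hpu.2.2.symm.trans hpv.2.2)
      linarith
    rw [hunion, Set.ncard_union_eq hdisj (Set.finite_of_ncard_ne_zero (by rw [hcu]; decide))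
      (Set.finite_of_ncard_ne_zero (by rw [hcv]; decide)), hcu, hcv]
  · rw [mem_crit3_iff h₂ h₃] at hp ⊢
    have hsub : -p.2 - -p.1 = -(p.2 - p.1) := by abel
    simpa only [hsub, Real.Angle.cos_neg] using hp

end
end

section
/- If l_1 = l_2 = l_3 = l > 0, then the function A(β_2, β_3) = l² ( sin β_2 + sin β_3 + sin(β_3 − β_2) ) has exactly three critical points on the torus (ℝ/2πℤ)²: one global maximum, one global minimum, and one further (degenerate, "monkey saddle") critical point. -/
/- Equilateral planar 3-arm with edge lengths `l₁ = l₂ = l₃ = l > 0`.  The moduli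
space is the torus `(ℝ/2πℤ)² = Real.Angle × Real.Angle` with coordinates `(β₂, β₃)`;
the doubled oriented area is `A(β₂,β₃) = l² (sin β₂ + sin β₃ + sin (β₃ − β₂))`. -/

noncomputable section

/-- the doubled oriented area of the equilateral 3-arm (lift to ℝ²). -/
def area3eq (l : ℝ) (b₂ b₃ : ℝ) : ℝ :=
  l ^ 2 * (Real.sin b₂ + Real.sin b₃ + Real.sin (b₃ - b₂))

/-- the doubled oriented area as a function on the torus `(ℝ/2πℤ)²`. -/
def area3eqT (l : ℝ) (p : Real.Angle × Real.Angle) : ℝ :=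
  l ^ 2 * (p.1.sin + p.2.sin + (p.2 - p.1).sin)

/-- the set of critical points of the oriented area on the torus. -/
def crit3eq (l : ℝ) : Set (Real.Angle × Real.Angle) :=
  {p | ∀ b₂ b₃ : ℝ, (b₂ : Real.Angle) = p.1 → (b₃ : Real.Angle) = p.2 →
    deriv (fun t => area3eq l t b₃) b₂ = 0 ∧
    deriv (fun t => area3eq l b₂ t) b₃ = 0}

open Real in
lemma mem_crit3eq_iff {l : ℝ} (hl : l ≠ 0) (p : Real.Angle × Real.Angle) :
    p ∈ crit3eq l ↔ p.1.cos = (p.2 - p.1).cos ∧ p.2.cos = -(p.2 - p.1).cos := by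
  have hx (x y : ℝ) : deriv (fun t => area3eq l t y) x = l ^ 2 * (cos x - cos (y - x)) := by
    refine HasDerivAt.deriv ?_
    have := (((hasDerivAt_sin x).add_const (sin y)).add
      ((hasDerivAt_id' x).const_sub y).sin).const_mul (l ^ 2)
    exact this.congr_deriv (by ring)
  have hy (x y : ℝ) : deriv (fun t => area3eq l x t) y = l ^ 2 * (cos y + cos (y - x)) := by
    refine HasDerivAt.deriv ?_
    have := (((hasDerivAt_sin y).const_add (sin x)).add
      ((hasDerivAt_id' y).sub_const x).sin).const_mul (l ^ 2)
    exact this.congr_deriv (by ring)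
  have key (x y : ℝ) : (deriv (fun t => area3eq l t y) x = 0 ∧
      deriv (fun t => area3eq l x t) y = 0) ↔
      (x : Angle).cos = ((y : Angle) - x).cos ∧ (y : Angle).cos = -((y : Angle) - x).cos := by
    rw [hx, hy, ← Angle.coe_sub, Angle.cos_coe, Angle.cos_coe, Angle.cos_coe]
    simp [hl, sub_eq_zero, add_eq_zero_iff_eq_neg]
  obtain ⟨a, b⟩ := p
  constructor
  · intro h
    induction a using Angle.induction_on with | _ x
    induction b using Angle.induction_on with | _ y
    exact (key x y).1 (h x y rfl rfl)
  · rintro h x y rfl rfl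
    exact (key x y).2 h

open Real in
lemma crit3eq_eq {l : ℝ} (hl : l ≠ 0) :
    crit3eq l = {(((π / 3 : ℝ) : Real.Angle), ((2 * (π / 3) : ℝ) : Real.Angle)),
      (((-(π / 3) : ℝ) : Real.Angle), ((2 * -(π / 3) : ℝ) : Real.Angle)),
      ((π : Real.Angle), 0)} := by
  ext ⟨a, b⟩
  rw [mem_crit3eq_iff hl]
  simp only [Set.mem_insert_iff, Set.mem_singleton_iff, Prod.mk.injEq]
  constructor
  · rintro ⟨h₁, h₂⟩
    have cos_eq_neg_one (h : a.cos = -1) : a = (π : Angle) := by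
      rw [← Angle.cos_coe_pi, Angle.cos_eq_iff_eq_or_eq_neg] at h
      simpa using h
    rcases Angle.cos_eq_iff_eq_or_eq_neg.1 h₁ with h | h
    · obtain rfl : b = a + a := sub_eq_iff_eq_add.1 h.symm
      rw [add_sub_cancel_right] at h₂
      induction a using Angle.induction_on with | _ x
      have hc : (cos x - 1 / 2) * (cos x + 1) = 0 := by
        rw [← Angle.coe_add, Angle.cos_coe, Angle.cos_coe, ← two_mul, cos_two_mul] at h₂
        linarith
      rcases mul_eq_zero.1 hc with hc | hc
      · have : (x : Angle).cos = ((π / 3 : ℝ) : Angle).cos := by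
          rw [Angle.cos_coe, Angle.cos_coe, cos_pi_div_three]; linarith
        rcases Angle.cos_eq_iff_eq_or_eq_neg.1 this with hx | hx
        · left
          rw [hx, two_mul, Angle.coe_add]; simp
        · right; left
          rw [hx, two_mul, Angle.coe_add]; simp
      · right; right
        rw [cos_eq_neg_one (by rw [Angle.cos_coe]; linarith)]
        simp
    · obtain rfl : b = 0 := sub_eq_self.1 ((neg_sub b a).symm.trans h.symm)
      right; right
      refine ⟨cos_eq_neg_one ?_, rfl⟩
      rw [← h₁, Angle.cos_zero] at h₂
      linarith
  · have h : cos (2 * (π / 3)) = -(1 / 2) := by rw [cos_two_mul, cos_pi_div_three]; norm_num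
    rintro (⟨rfl, rfl⟩ | ⟨rfl, rfl⟩ | ⟨rfl, rfl⟩)
    · rw [← Angle.coe_sub, Angle.cos_coe, Angle.cos_coe, Angle.cos_coe, h,
        show 2 * (π / 3) - π / 3 = π / 3 by ring, cos_pi_div_three]
      simp
    · rw [← Angle.coe_sub, Angle.cos_coe, Angle.cos_coe, Angle.cos_coe,
        show 2 * -(π / 3) - -(π / 3) = -(π / 3) by ring, mul_neg, cos_neg, cos_neg, h,
        cos_pi_div_three]
      simp
    · simp

/-- Among pairs of angles, `sin a + sin b + sin (a + b)` is maximal when both are `π / 3`. -/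
lemma sin_add_sin_add_sin_add_le (a b : ℝ) :
    Real.sin a + Real.sin b + Real.sin (a + b) ≤ 3 * √3 / 2 := by
  have h3 : √3 ^ 2 = 3 := Real.sq_sqrt (by norm_num)
  have h3' : 0 < √3 := by positivity
  have amgm (u v : ℝ) : u * v ≤ √3 / 2 * (u ^ 2 + v ^ 2 / 3) := by
    have : √3 / 2 * (u ^ 2 + v ^ 2 / 3) - u * v = √3 / 6 * (√3 * u - v) ^ 2 := by
      linear_combination (-√3 / 6 * u ^ 2 + u * v / 3) * h3
    have : 0 ≤ √3 / 6 * (√3 * u - v) ^ 2 := by positivity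
    linarith
  have ha := amgm (Real.sin a) (1 + Real.cos b)
  have hb := amgm (Real.sin b) (1 + Real.cos a)
  rw [Real.sin_sq] at ha hb
  rw [Real.sin_add]
  nlinarith [mul_nonneg h3'.le (sq_nonneg (Real.cos a - 1 / 2)),
    mul_nonneg h3'.le (sq_nonneg (Real.cos b - 1 / 2))]

lemma abs_area3eq_le (l x y : ℝ) : |area3eq l x y| ≤ l ^ 2 * (3 * √3 / 2) := by
  have h₁ := sin_add_sin_add_sin_add_le x (y - x)
  have h₂ := sin_add_sin_add_sin_add_le (-x) (-(y - x))
  rw [add_sub_cancel] at h₁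
  rw [← neg_add, add_sub_cancel, Real.sin_neg, Real.sin_neg, Real.sin_neg] at h₂
  rw [area3eq, abs_mul, abs_of_nonneg (sq_nonneg l)]
  gcongr
  rw [abs_le]
  constructor <;> linarith

lemma area3eqT_coe (l x y : ℝ) :
    area3eqT l ((x : Real.Angle), (y : Real.Angle)) = area3eq l x y := by
  simp only [area3eqT, area3eq, ← Real.Angle.coe_sub, Real.Angle.sin_coe]

lemma abs_area3eqT_le (l : ℝ) (p : Real.Angle × Real.Angle) :
    |area3eqT l p| ≤ l ^ 2 * (3 * √3 / 2) := by
  obtain ⟨a, b⟩ := p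
  induction a using Real.Angle.induction_on with | _ x
  induction b using Real.Angle.induction_on with | _ y
  rw [area3eqT_coe]
  exact abs_area3eq_le l x y

open Real in
lemma area3eq_pi_div_three (l : ℝ) : area3eq l (π / 3) (2 * (π / 3)) = l ^ 2 * (3 * √3 / 2) := by
  rw [area3eq, show 2 * (π / 3) - π / 3 = π / 3 by ring, sin_two_mul, sin_pi_div_three,
    cos_pi_div_three]
  ring

lemma area3eq_neg (l x y : ℝ) : area3eq l (-x) (-y) = -area3eq l x y := by
  rw [area3eq, area3eq, show -y - -x = -(y - x) by ring, Real.sin_neg, Real.sin_neg, Real.sin_neg]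
  ring

open Real in
lemma fderiv_fderiv_area3eq_eq_zero (l : ℝ) {x y : ℝ} (hx : sin x = 0) (hy : sin y = 0) :
    fderiv ℝ (fderiv ℝ (fun q : ℝ × ℝ => area3eq l q.1 q.2)) (x, y) = 0 := by
  have hfst (q : ℝ × ℝ) : HasFDerivAt Prod.fst (ContinuousLinearMap.fst ℝ ℝ ℝ) q := hasFDerivAt_fst
  have hsnd (q : ℝ × ℝ) : HasFDerivAt Prod.snd (ContinuousLinearMap.snd ℝ ℝ ℝ) q := hasFDerivAt_snd
  have hyx : sin (y - x) = 0 := by simp [sin_sub, hx, hy]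
  have h₁ : fderiv ℝ (fun q : ℝ × ℝ => area3eq l q.1 q.2) = fun q => l ^ 2 •
      (cos q.1 • ContinuousLinearMap.fst ℝ ℝ ℝ + cos q.2 • ContinuousLinearMap.snd ℝ ℝ ℝ +
        cos (q.2 - q.1) • (ContinuousLinearMap.snd ℝ ℝ ℝ - ContinuousLinearMap.fst ℝ ℝ ℝ)) := by
    ext1 q
    exact ((((hfst q).sin.add (hsnd q).sin).add ((hsnd q).sub (hfst q)).sin).const_mul _).fderiv
  rw [h₁]
  have h₂ := (((((hfst (x, y)).cos.smul_const (ContinuousLinearMap.fst ℝ ℝ ℝ)).add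
    ((hsnd (x, y)).cos.smul_const (ContinuousLinearMap.snd ℝ ℝ ℝ))).add
    (((hsnd (x, y)).sub (hfst (x, y))).cos.smul_const
      (ContinuousLinearMap.snd ℝ ℝ ℝ - ContinuousLinearMap.fst ℝ ℝ ℝ))).const_smul (l ^ 2))
  refine HasFDerivAt.fderiv (h₂.congr_fderiv ?_)
  ext <;> simp [hx, hy, hyx]

/-- For the equilateral 3-arm, `A` has exactly three critical points
on the torus: a global maximum, a global minimum, and one further degenerate
("monkey saddle") critical point. -/
theorem equilateral_three_critical_points (l : ℝ) (hl : 0 < l) :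
    ∃ pmax pmin psad : Real.Angle × Real.Angle,
      pmax ≠ pmin ∧ pmax ≠ psad ∧ pmin ≠ psad ∧
      crit3eq l = {pmax, pmin, psad} ∧
      (∀ q : Real.Angle × Real.Angle, area3eqT l q ≤ area3eqT l pmax) ∧
      (∀ q : Real.Angle × Real.Angle, area3eqT l pmin ≤ area3eqT l q) ∧
      (∀ b₂ b₃ : ℝ, (b₂ : Real.Angle) = psad.1 → (b₃ : Real.Angle) = psad.2 →
        ¬Function.Bijective
          ⇑(fderiv ℝ (fderiv ℝ (fun q : ℝ × ℝ => area3eq l q.1 q.2)) (b₂, b₃))) := by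
  have hl0 : l ≠ 0 := hl.ne'
  have hpos : 0 < l ^ 2 * (3 * √3 / 2) := by positivity
  have hmax := area3eq_pi_div_three l
  have hmin : area3eq l (-(Real.pi / 3)) (2 * -(Real.pi / 3)) = -(l ^ 2 * (3 * √3 / 2)) := by
    rw [mul_neg, area3eq_neg, hmax]
  have hsad : area3eqT l ((Real.pi : Real.Angle), 0) = 0 := by
    simp [area3eqT]
  rw [← area3eqT_coe] at hmax hmin
  refine ⟨_, _, _, ?_, ?_, ?_, crit3eq_eq hl0, fun q => ?_, fun q => ?_, fun x y hx hy h => ?_⟩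
  · exact ne_of_apply_ne (area3eqT l) (by linarith)
  · exact ne_of_apply_ne (area3eqT l) (by linarith)
  · exact ne_of_apply_ne (area3eqT l) (by linarith)
  · exact hmax ▸ (abs_le.1 (abs_area3eqT_le l q)).2
  · exact hmin ▸ (abs_le.1 (abs_area3eqT_le l q)).1
  · have hx' : Real.sin x = 0 := by rw [← Real.Angle.sin_coe, hx, Real.Angle.sin_coe_pi]
    have hy' : Real.sin y = 0 := by rw [← Real.Angle.sin_coe, hy, Real.Angle.sin_zero]
    rw [fderiv_fderiv_area3eq_eq_zero l hx' hy'] at h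
    exact one_ne_zero (congrArg Prod.fst (h.1 (a₁ := ((1 : ℝ), (0 : ℝ))) (a₂ := 0) rfl))

end
end
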